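/- Fix integers $k,m\ge 1$, disjoint alphabets $\mathcal T=\{t_1,\dots,t_k\}$ and $\mathcal A=\{a_1,\dots,a_m\}$, and for all $1\le i<j\le k$ an element $a_{ij}\in\mathcal A$. Let $F$ be the free group on $\mathcal T$, let $|u|$ denote the length of the reduced word of $u\in F$, and let $\theta:F\to\mathbb R^k$ be the homomorphism sending $t_i$ to the $i$-th standard basis vector; $\|\cdot\|$ is the Euclidean norm. For $v\in\mathbb Z^k$ put $u_v=t_1^{v_1}\cdots t_k^{v_k}$ (the ordered words), and for $u\in F$ put $\bar u=u_{\theta(u)}$. Write $[x,y]=x^{-1}y^{-1}xy$. Let $T=\mathbb Z^k$, regard elements of $\mathbb ZT$ as finitely supported functions $\mathbb Z^k\to\mathbb Z$, and let $\Lambda^+,\Lambda^-\subset\mathbb ZT$ be finite sets such that for every nonzero $x\in\mathbb R^k$ there is $\lambda\in\Lambda^+\cup\Lambda^-$ with $\langle x,v\rangle>0$ for all $v\in\operatorname{supp}\lambda$. For $\rho>0$ and a finite set $\mathcal R$ of words in $(\mathcal A\cup\mathcal T)^{\pm1}$, let $H(\rho,\mathcal R)$ be the group with generators $\mathcal A\cup\mathcal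 T$ and relators (i) $[t_i,t_j]\,a_{ij}^{-1}$ for $1\le i<j\le k$; (ii) $[a,u_v^{-1}bu_v]$ for $a,b\in\mathcal A$ and $v\in\mathbb Z^k$ with $\|v\|<\rho$; (iii) $\bigl(\prod_{v\in\operatorname{supp}\lambda}u_v^{-1}a^{\lambda(v)}u_v\bigr)a^{-1}$ for $a\in\mathcal A$, $\lambda\in\Lambda^+$, and $\bigl(\prod_{v\in\operatorname{supp}\lambda}u_v a^{\lambda(v)}u_v^{-1}\bigr)a^{-1}$ for $a\in\mathcal A$, $\lambda\in\Lambda^-$, each product being taken in an arbitrary fixed order on $\operatorname{supp}\lambda$; (iv) the elements of $\mathcal R$. The area of a word $w$ representing $1$ in $H(\rho,\mathcal R)$ is the least $N$ such that $w$ equals, in the free group on $\mathcal A\cup\mathcal T$, a product of $N$ conjugates of these relators and their inverses. Then there exists $\rho_0>0$, depending only on $k$ and $\Lambda^+\cup\Lambda^-$, such that for every $\rho\ge\rho_0$ there is a constant $K>1$, depending only on $k$, $m$, $\rho$ and $\Lambda^+\cup\Lambda^-$ (and not on $\mathcal R$), with the following property. In every group $H(\rho,\mathcal R)$, for every $a\in\mathcal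 A$ and every $u\in F$, the word $w=(u^{-1}au)(\bar u^{-1}a^{-1}\bar u)$ represents $1$, and for every $n\in\mathbb N$: (1) if every prefix $p$ of the reduced word of $u$ satisfies $\|\theta(p)\|<n$, then the area of $w$ is at most $|u|\,K^n$; (2) if $|u|\le n$, then the area of $w$ is at most $K^n$. -/

import Mathlib

/-- `w` equals a product of exactly `N` conjugates of elements of `R` and their inverses. -/
def IsProdConj {G : Type*} [Group G] (R : Set G) (w : G) (N : ℕ) : Prop :=
  ∃ r f : Fin N → G, (∀ i, r i ∈ R ∨ (r i)⁻¹ ∈ R) ∧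
    w = (List.ofFn fun i => (f i)⁻¹ * r i * f i).prod

/-- The area of `w` with respect to the relators `R`: the least `N` such that `w` is a product of
`N` conjugates of elements of `R` and their inverses. (It is meaningful for `w` in the normal
closure of `R`; elsewhere the set is empty and the value is the default `0`.) -/
noncomputable def area {G : Type*} [Group G] (R : Set G) (w : G) : ℕ :=
  sInf {N | IsProdConj R w N}

/-- The commutator `[x, y] = x⁻¹ * y⁻¹ * x * y`. -/
def pcomm {G : Type*} [Group G] (x y : G) : G := x⁻¹ * y⁻¹ * x * y

/-- The conjugate `x ^ y = y⁻¹ * x * y`. -/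
def pconj {G : Type*} [Group G] (x y : G) : G := y⁻¹ * x * y

/-- The Euclidean norm of an integer vector. -/
noncomputable def normV {k : ℕ} (v : Fin k → ℤ) : ℝ :=
  Real.sqrt (∑ i, (v i : ℝ) ^ 2)

/-- The homomorphism `θ` from the free group on `t₁, …, t_k` with `θ(tᵢ) = eᵢ`; its values have
integer coordinates. -/
def theta {k : ℕ} : FreeGroup (Fin k) →* Multiplicative (Fin k → ℤ) :=
  FreeGroup.lift fun i => Multiplicative.ofAdd (Pi.single i 1)

/-- The exponent-sum vector `θ(u)`. -/
def expVec {k : ℕ} (u : FreeGroup (Fin k)) : Fin k → ℤ := Multiplicative.toAdd (theta u)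

/-- The ordered word `u_v = t₁^{v₁} ⋯ t_k^{v_k}`. -/
def ordWord {k : ℕ} (v : Fin k → ℤ) : FreeGroup (Fin k) :=
  (List.ofFn fun i : Fin k => FreeGroup.of i ^ v i).prod

/-- The ordered word with the same exponent sums as `u`. -/
def ordered {k : ℕ} (u : FreeGroup (Fin k)) : FreeGroup (Fin k) := ordWord (expVec u)

/-- The trace of `u` lies in the open ball of radius `n`: `‖θ(p)‖ < n` for every prefix `p` of the
reduced word of `u`. -/
def TraceInBall {k : ℕ} (u : FreeGroup (Fin k)) (n : ℕ) : Prop :=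
  ∀ p : List (Fin k × Bool), p <+: u.toWord → normV (expVec (FreeGroup.mk p)) < n

/-- The generator `aᵢ ∈ 𝒜`. -/
def agen {m k : ℕ} (i : Fin m) : FreeGroup (Fin m ⊕ Fin k) := FreeGroup.of (Sum.inl i)

/-- The generator `tᵢ ∈ 𝒯`. -/
def tgen {m k : ℕ} (i : Fin k) : FreeGroup (Fin m ⊕ Fin k) := FreeGroup.of (Sum.inr i)

/-- A word in the letters `𝒯`, viewed as a word in the letters `𝒜 ∪ 𝒯`. -/
def tword {m k : ℕ} (u : FreeGroup (Fin k)) : FreeGroup (Fin m ⊕ Fin k) :=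
  FreeGroup.map Sum.inr u

/-- `ord` lists the support of each `λ ∈ ℤT` without repetition. -/
def IsSupportOrder {k : ℕ} (ord : ((Fin k → ℤ) →₀ ℤ) → List (Fin k → ℤ)) : Prop :=
  ∀ lam, (ord lam).Nodup ∧ ∀ v, v ∈ ord lam ↔ v ∈ lam.support

/-- The relator `(∏_{v ∈ supp λ} u_v⁻¹ a^{λ(v)} u_v) a⁻¹`, with `l` listing `supp λ`. -/
def lamRelP {m k : ℕ} (l : List (Fin k → ℤ)) (a : Fin m) (lam : (Fin k → ℤ) →₀ ℤ) :
    FreeGroup (Fin m ⊕ Fin k) :=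
  (l.map fun v => pconj (agen a ^ lam v) (tword (ordWord v))).prod * (agen a)⁻¹

/-- The relator `(∏_{v ∈ supp λ} u_v a^{λ(v)} u_v⁻¹) a⁻¹`, with `l` listing `supp λ`. -/
def lamRelM {m k : ℕ} (l : List (Fin k → ℤ)) (a : Fin m) (lam : (Fin k → ℤ) →₀ ℤ) :
    FreeGroup (Fin m ⊕ Fin k) :=
  (l.map fun v => pconj (agen a ^ lam v) (tword (ordWord v))⁻¹).prod * (agen a)⁻¹

/-- The relators of `H(ρ, ℛ)`. Only the values `aij i j` with `i < j` matter. -/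
def HRel {m k : ℕ} (aij : Fin k → Fin k → Fin m) (Lp Lm : Finset ((Fin k → ℤ) →₀ ℤ))
    (ord : ((Fin k → ℤ) →₀ ℤ) → List (Fin k → ℤ)) (ρ : ℝ)
    (Rx : Set (FreeGroup (Fin m ⊕ Fin k))) : Set (FreeGroup (Fin m ⊕ Fin k)) :=
  {w | (∃ i j : Fin k, i < j ∧ w = pcomm (tgen i) (tgen j) * (agen (aij i j))⁻¹) ∨
       (∃ (a b : Fin m) (v : Fin k → ℤ), normV v < ρ ∧
         w = pcomm (agen a) (pconj (agen b) (tword (ordWord v)))) ∨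
       (∃ a : Fin m, ∃ lam ∈ Lp, w = lamRelP (ord lam) a lam) ∨
       (∃ a : Fin m, ∃ lam ∈ Lm, w = lamRelM (ord lam) a lam) ∨
       w ∈ Rx}

/-- Every nonzero `x ∈ ℝ^k` pairs positively with the whole support of some `λ ∈ L`. -/
def TameCond {k : ℕ} (L : Finset ((Fin k → ℤ) →₀ ℤ)) : Prop :=
  ∀ x : Fin k → ℝ, x ≠ 0 → ∃ lam ∈ L, ∀ v ∈ lam.support, 0 < ∑ i, x i * (v i : ℝ)

/-- The word `(u⁻¹ a u)(ū⁻¹ a⁻¹ ū)`. -/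
def orderingWord {m k : ℕ} (a : Fin m) (u : FreeGroup (Fin k)) : FreeGroup (Fin m ⊕ Fin k) :=
  pconj (agen a) (tword u) * pconj (agen a)⁻¹ (tword (ordered u))

/-! ### Areas as a bi-invariant metric -/

theorem isProdConj_iff_exists_list {G : Type*} [Group G] {R : Set G} {w : G} {N : ℕ} :
    IsProdConj R w N ↔ ∃ l : List G, l.length = N ∧
      (∀ x ∈ l, ∃ r f : G, (r ∈ R ∨ r⁻¹ ∈ R) ∧ x = f⁻¹ * r * f) ∧ w = l.prod := by
  constructor
  · rintro ⟨r, f, h, rfl⟩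
    refine ⟨_, List.length_ofFn, ?_, rfl⟩
    intro x hx
    obtain ⟨i, rfl⟩ := List.mem_ofFn.1 hx
    exact ⟨r i, f i, h i, rfl⟩
  · rintro ⟨l, rfl, h, rfl⟩
    choose! r f hr hx using h
    refine ⟨fun i => r (l.get i), fun i => f (l.get i), fun i => hr _ (l.get_mem i), ?_⟩
    congr 1
    conv_lhs => rw [← List.ofFn_get l]
    congr 1
    funext i
    exact hx _ (l.get_mem i)

/-- `w` is a product of at most `A` conjugates of elements of `R` and their inverses. -/
def AreaLe {G : Type*} [Group G] (R : Set G) (A : ℝ) (w : G) : Prop :=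
  ∃ N : ℕ, IsProdConj R w N ∧ (N : ℝ) ≤ A

section AreaLe

variable {G : Type*} [Group G] {R : Set G} {A B : ℝ} {v w x y z x' y' : G}

theorem AreaLe.mono (h : AreaLe R A w) (hAB : A ≤ B) : AreaLe R B w :=
  let ⟨N, hN, hA⟩ := h
  ⟨N, hN, hA.trans hAB⟩

theorem AreaLe.area_le (h : AreaLe R A w) : (area R w : ℝ) ≤ A := by
  obtain ⟨N, hN, hA⟩ := h
  exact (Nat.cast_le.2 (Nat.sInf_le hN)).trans hA

theorem AreaLe.mem_normalClosure (h : AreaLe R A w) : w ∈ Subgroup.normalClosure R := by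
  obtain ⟨N, hN, -⟩ := h
  obtain ⟨l, -, hl, rfl⟩ := isProdConj_iff_exists_list.1 hN
  refine Subgroup.list_prod_mem _ fun x hx => ?_
  obtain ⟨r, f, hr, rfl⟩ := hl x hx
  have hr' : r ∈ Subgroup.normalClosure R := by
    rcases hr with hr | hr
    · exact Subgroup.subset_normalClosure hr
    · exact inv_mem_iff.1 (Subgroup.subset_normalClosure hr)
  simpa using Subgroup.normalClosure_normal.conj_mem r hr' f⁻¹

theorem areaLe_one (hA : 0 ≤ A) : AreaLe R A (1 : G) :=
  ⟨0, isProdConj_iff_exists_list.2 ⟨[], by simp⟩, by simpa using hA⟩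

theorem areaLe_of_mem (hw : w ∈ R) : AreaLe R 1 w :=
  ⟨1, isProdConj_iff_exists_list.2 ⟨[w], rfl, by
    intro x hx
    exact ⟨w, 1, Or.inl hw, by simpa using hx⟩, by simp⟩, by simp⟩

theorem AreaLe.mul (hv : AreaLe R A v) (hw : AreaLe R B w) : AreaLe R (A + B) (v * w) := by
  obtain ⟨M, hM, hA⟩ := hv
  obtain ⟨N, hN, hB⟩ := hw
  obtain ⟨l, rfl, hl, rfl⟩ := isProdConj_iff_exists_list.1 hM
  obtain ⟨l', rfl, hl', rfl⟩ := isProdConj_iff_exists_list.1 hN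
  refine ⟨_, isProdConj_iff_exists_list.2 ⟨l ++ l', rfl, ?_, by simp⟩, ?_⟩
  · intro x hx
    rcases List.mem_append.1 hx with hx | hx
    exacts [hl x hx, hl' x hx]
  · push_cast [List.length_append]
    linarith

theorem AreaLe.inv (hw : AreaLe R A w) : AreaLe R A w⁻¹ := by
  obtain ⟨N, hN, hA⟩ := hw
  obtain ⟨l, rfl, hl, rfl⟩ := isProdConj_iff_exists_list.1 hN
  refine ⟨_, isProdConj_iff_exists_list.2
    ⟨(l.map fun x => x⁻¹).reverse, rfl, ?_, List.prod_inv_reverse l⟩, by simpa using hA⟩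
  intro x hx
  obtain ⟨y, hy, rfl⟩ := List.mem_map.1 (List.mem_reverse.1 hx)
  obtain ⟨r, f, hr, rfl⟩ := hl y hy
  exact ⟨r⁻¹, f, by simpa using hr.symm, by group⟩

theorem AreaLe.conj (hw : AreaLe R A w) (g : G) : AreaLe R A (g * w * g⁻¹) := by
  obtain ⟨N, hN, hA⟩ := hw
  obtain ⟨l, rfl, hl, rfl⟩ := isProdConj_iff_exists_list.1 hN
  refine ⟨_, isProdConj_iff_exists_list.2 ⟨l.map (MulAut.conj g), rfl, ?_, ?_⟩, by simpa using hA⟩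
  · intro x hx
    obtain ⟨y, hy, rfl⟩ := List.mem_map.1 hx
    obtain ⟨r, f, hr, rfl⟩ := hl y hy
    exact ⟨r, f * g⁻¹, hr, by simp only [MulAut.conj_apply]; group⟩
  · rw [← map_list_prod, MulAut.conj_apply]

/-- `x` and `y` differ by a product of at most `A` conjugates of relators. -/
def Near (R : Set G) (A : ℝ) (x y : G) : Prop := AreaLe R A (x * y⁻¹)

/-- `x` and `y` commute up to a product of at most `A` conjugates of relators. -/
def CommLe (R : Set G) (A : ℝ) (x y : G) : Prop := Near R A (x * y) (y * x)

theorem Near.mono (h : Near R A x y) (hAB : A ≤ B) : Near R B x y := AreaLe.mono h hAB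

theorem Near.refl (x : G) (hA : 0 ≤ A) : Near R A x x := by
  simpa [Near] using areaLe_one hA

theorem Near.symm (h : Near R A x y) : Near R A y x := by
  simpa [Near] using AreaLe.inv h

theorem Near.trans (h : Near R A x y) (h' : Near R B y z) : Near R (A + B) x z := by
  simpa [Near] using AreaLe.mul h h'

theorem Near.mul_right (h : Near R A x y) (g : G) : Near R A (x * g) (y * g) := by
  simpa [Near, mul_assoc] using h

theorem Near.mul_left (h : Near R A x y) (g : G) : Near R A (g * x) (g * y) := by
  simpa [Near, mul_assoc] using AreaLe.conj h g

theorem Near.inv (h : Near R A x y) : Near R A x⁻¹ y⁻¹ := by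
  simpa using ((h.mul_left x⁻¹).mul_right y⁻¹).symm

theorem Near.pconj (h : Near R A x y) (g : G) : Near R A (pconj x g) (pconj y g) :=
  (h.mul_left g⁻¹).mul_right g

theorem pconj_mul (x g h : G) : pconj x (g * h) = pconj (pconj x g) h := by
  simp [pconj, mul_assoc]

theorem mul_pconj (x y g : G) : pconj (x * y) g = pconj x g * pconj y g := by
  simp [pconj, mul_assoc]

theorem pconj_pconj_inv (x g : G) : pconj (pconj x g) g⁻¹ = x := by
  simp [pconj, mul_assoc]

theorem pconj_zpow (x g : G) (n : ℤ) : pconj (x ^ n) g = pconj x g ^ n := by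
  simpa [pconj] using (conj_zpow (a := g⁻¹) (b := x) (i := n)).symm

theorem pconj_list_prod (l : List G) (g : G) :
    pconj l.prod g = (l.map fun x => pconj x g).prod := by
  induction l with
  | nil => simp [pconj]
  | cons x l ih => rw [List.prod_cons, mul_pconj, ih, List.map_cons, List.prod_cons]

theorem CommLe.mono (h : CommLe R A x y) (hAB : A ≤ B) : CommLe R B x y := AreaLe.mono h hAB

theorem CommLe.symm (h : CommLe R A x y) : CommLe R A y x := Near.symm h

theorem CommLe.inv_right (h : CommLe R A x y) : CommLe R A x y⁻¹ := by
  have := (Near.mul_left (Near.mul_right h y⁻¹) y⁻¹).symm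
  simpa [CommLe, mul_assoc] using this

theorem CommLe.mul_right (h : CommLe R A x y) (h' : CommLe R B x z) :
    CommLe R (A + B) x (y * z) := by
  have h₁ := Near.mul_right h z
  have h₂ := Near.mul_left h' y
  rw [← mul_assoc, ← mul_assoc] at h₂
  have := h₁.trans h₂
  simpa [CommLe, mul_assoc] using this

theorem commLe_one_right (x : G) : CommLe R 0 x 1 := by
  simpa [CommLe] using Near.refl x le_rfl

theorem CommLe.pow_right (h : CommLe R A x y) (n : ℕ) : CommLe R (n * A) x (y ^ n) := by
  induction n with
  | zero => simpa using commLe_one_right x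
  | succ n ih =>
    rw [pow_succ]
    refine (ih.mul_right h).mono (le_of_eq ?_)
    push_cast
    ring

theorem CommLe.zpow_right (h : CommLe R A x y) (n : ℤ) :
    CommLe R (n.natAbs * A) x (y ^ n) := by
  rcases Int.natAbs_eq n with hn | hn
  · rw [hn, zpow_natCast]
    simpa using h.pow_right n.natAbs
  · rw [hn, zpow_neg, zpow_natCast]
    simpa using (h.pow_right n.natAbs).inv_right

theorem CommLe.list_prod_right {ι : Type*} (l : List ι) (y : ι → G) (n : ι → ℕ)
    (h : ∀ i ∈ l, CommLe R (n i * A) x (y i)) :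
    CommLe R ((l.map n).sum * A) x (l.map y).prod := by
  induction l with
  | nil => simpa using commLe_one_right x
  | cons i l ih =>
    rw [List.map_cons (f := y), List.prod_cons]
    refine ((h i (by simp)).mul_right (ih fun j hj => h j (by simp [hj]))).mono (le_of_eq ?_)
    push_cast [List.map_cons, List.sum_cons]
    ring

theorem CommLe.pconj (h : CommLe R A x y) (g : G) : CommLe R A (pconj x g) (pconj y g) := by
  have := Near.pconj h g
  rwa [mul_pconj, mul_pconj] at this

theorem CommLe.congr_right (h : CommLe R A x y) (h' : Near R B y' y) :
    CommLe R (A + 2 * B) x y' := by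
  have := ((h'.mul_left x).trans h).trans (h'.symm.mul_right x)
  exact Near.mono this (by linarith)

theorem CommLe.near_pconj (h : CommLe R A x y) : Near R A (_root_.pconj x y) x := by
  have := Near.mul_left h y⁻¹
  simpa [_root_.pconj, mul_assoc] using this

theorem commLe_iff_pcomm : CommLe R A x y ↔ AreaLe R A (pcomm x y) := by
  constructor
  · intro h
    have := AreaLe.conj h (y * x)⁻¹
    simpa [pcomm, mul_assoc] using this
  · intro h
    have := AreaLe.conj h (y * x)
    simpa [CommLe, Near, pcomm, mul_assoc] using this

theorem commLe_pconj_left_iff (g : G) :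
    CommLe R A (_root_.pconj x g) y ↔ CommLe R A x (_root_.pconj y g⁻¹) := by
  constructor
  · intro h
    simpa [pconj_pconj_inv] using h.pconj g⁻¹
  · intro h
    have := h.pconj g
    rwa [← pconj_mul y, inv_mul_cancel, show _root_.pconj y 1 = y by simp [_root_.pconj]] at this

end AreaLe

/-! ### Ordered products of powers -/

/-- The ordered product `τ₁^{z₁} ⋯ τ_k^{z_k}`. -/
def prodPow {G : Type*} [Group G] {k : ℕ} (τ : Fin k → G) (z : Fin k → ℤ) : G :=
  (List.ofFn fun i => τ i ^ z i).prod

/-- The `ℓ¹` norm of an integer vector. -/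
def absSum {k : ℕ} (z : Fin k → ℤ) : ℕ := ∑ i, (z i).natAbs

section prodPow

variable {G : Type*} [Group G] {k : ℕ}

theorem prodPow_zero (τ : Fin k → G) : prodPow τ 0 = 1 := by
  refine List.prod_eq_one fun x hx => ?_
  obtain ⟨i, rfl⟩ := List.mem_ofFn.1 hx
  simp

theorem prodPow_add_single (τ : Fin k → G) (z : Fin k → ℤ) (j : Fin k) (n : ℤ)
    (hz : ∀ l, j < l → z l = 0) : prodPow τ (z + Pi.single j n) = prodPow τ z * τ j ^ n := by
  induction k with
  | zero => exact j.elim0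
  | succ k ih =>
    simp only [prodPow, List.ofFn_succ, List.prod_cons]
    cases j using Fin.cases with
    | zero =>
      have h0 : ∀ l : Fin k, z l.succ = 0 := fun l => hz _ (Fin.succ_pos l)
      have h1 : (List.ofFn fun l : Fin k => τ l.succ ^ z l.succ).prod = 1 := by
        simp [h0]
      have h2 : (List.ofFn fun l : Fin k =>
          τ l.succ ^ (z + Pi.single (0 : Fin (k + 1)) n : Fin (k + 1) → ℤ) l.succ).prod = 1 := by
        simp [h0]
      rw [h1, h2]
      simp [zpow_add]
    | succ j =>
      have := ih (fun l => τ l.succ) (fun l => z l.succ) j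
        fun l hl => hz _ (Fin.succ_lt_succ_iff.2 hl)
      simp only [prodPow] at this
      rw [mul_assoc, ← this]
      congr 2
      · simp
      · congr 1
        funext l
        congr 1
        simp only [Pi.add_apply, Pi.single_apply, Fin.succ_inj]

theorem prodPow_inv (τ : Fin k → G) (z : Fin k → ℤ) :
    (prodPow τ z)⁻¹ = prodPow (fun i => τ i.rev) (fun i => -z i.rev) := by
  rw [prodPow, prodPow, List.prod_inv_reverse]
  congr 1
  apply List.ext_getElem
  · simp
  · intro i h₁ h₂
    simp only [List.length_ofFn] at h₂
    simp only [List.getElem_reverse, List.getElem_map, List.getElem_ofFn, List.length_map,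
      List.length_ofFn, zpow_neg]
    have : (⟨k - 1 - i, by omega⟩ : Fin k) = Fin.rev ⟨i, h₂⟩ := by
      ext
      simp only [Fin.val_rev]
      omega
    rw [this]

theorem exists_last_ne_zero {z : Fin k → ℤ} {i : Fin k} (hi : z i ≠ 0) :
    ∃ j, i ≤ j ∧ z j ≠ 0 ∧ ∀ l, j < l → z l = 0 := by
  classical
  have hne : (Finset.univ.filter fun l => z l ≠ 0).Nonempty := ⟨i, by simpa using hi⟩
  refine ⟨(Finset.univ.filter fun l => z l ≠ 0).max' hne, Finset.le_max' _ _ (by simpa using hi),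
    (Finset.mem_filter.1 (Finset.max'_mem _ hne)).2, fun l hl => ?_⟩
  by_contra h
  exact absurd (Finset.le_max' _ l (by simpa using h)) (not_le.2 hl)

/-- Removing the last letter of the ordered word with nonzero exponent at `i`. -/
theorem exists_add_single_eq {z : Fin k → ℤ} {i : Fin k} (hi : z i ≠ 0) :
    ∃ (j : Fin k) (s : ℤ) (y : Fin k → ℤ), i ≤ j ∧ (s = 1 ∨ s = -1) ∧ z = y + Pi.single j s ∧
      (∀ l, j < l → y l = 0) ∧ (z j).natAbs = (y j).natAbs + 1 ∧ ∀ l, l ≠ j → y l = z l := by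
  obtain ⟨j, hij, hj, hl⟩ := exists_last_ne_zero hi
  refine ⟨j, (z j).sign, z - Pi.single j (z j).sign, hij, ?_, by simp, ?_, ?_, ?_⟩
  · rcases lt_or_gt_of_ne hj with h | h
    · exact Or.inr (Int.sign_eq_neg_one_of_neg h)
    · exact Or.inl (Int.sign_eq_one_of_pos h)
  · intro l hjl
    simp [hl l hjl, hjl.ne']
  · simp only [Pi.sub_apply, Pi.single_eq_same]
    rcases lt_or_gt_of_ne hj with h | h
    · rw [Int.sign_eq_neg_one_of_neg h]
      omega
    · rw [Int.sign_eq_one_of_pos h]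
      omega
  · intro l hlj
    simp [hlj]

variable {R : Set G} {τ : Fin k → G} {c : Fin k → Fin k → G}

/-- A letter `τᵢ` moves to its place in an ordered conjugating word. -/
theorem near_pconj_prodPow_mul (hτ : ∀ i j, i < j → Near R 1 (pcomm (τ i) (τ j)) (c i j))
    (x : G) {A : ℝ} (i : Fin k) (z : Fin k → ℤ)
    (hq : ∀ q : Fin k → ℤ, (∀ l, (q l).natAbs ≤ ((z + Pi.single i 1 : Fin k → ℤ) l).natAbs) →
      ∀ a b, a < b → CommLe R A (pconj x (prodPow τ q)) (c a b)) :
    Near R ((∑ j ∈ Finset.Ioi i, (z j).natAbs : ℕ) * (2 + A))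
      (pconj x (prodPow τ z * τ i)) (pconj x (prodPow τ (z + Pi.single i 1))) := by
  induction hn : ∑ j ∈ Finset.Ioi i, (z j).natAbs generalizing z with
  | zero =>
    rw [Finset.sum_eq_zero_iff] at hn
    rw [prodPow_add_single τ z i 1 fun l hl => by simpa using hn l (Finset.mem_Ioi.2 hl), zpow_one]
    exact Near.refl _ (by simp)
  | succ n ih =>
    obtain ⟨i', hi', hzi'⟩ : ∃ i' ∈ Finset.Ioi i, (z i').natAbs ≠ 0 := by
      by_contra! h
      rw [Finset.sum_eq_zero h] at hn
      omega
    obtain ⟨j, s, y, hij, hs, hzy, hy, hj, hne⟩ :=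
      exists_add_single_eq (z := z) (i := i') (by simpa using hzi')
    have hij : i < j := (Finset.mem_Ioi.1 hi').trans_le hij
    have hyn : ∑ l ∈ Finset.Ioi i, (y l).natAbs = n := by
      rw [Finset.sum_eq_sum_sdiff_singleton_add (Finset.mem_Ioi.2 hij)] at hn ⊢
      rw [Finset.sum_congr rfl fun l hl => by
        rw [hne l (Finset.notMem_singleton.1 (Finset.mem_sdiff.1 hl).2)]]
      omega
    have hyz : ∀ l, ((y + Pi.single i 1 : Fin k → ℤ) l).natAbs ≤
        ((z + Pi.single i 1 : Fin k → ℤ) l).natAbs := by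
      intro l
      rcases eq_or_ne l j with rfl | hl
      · simp only [Pi.add_apply, Pi.single_eq_of_ne hij.ne', add_zero]
        omega
      · simp [hne l hl]
    have key := ih y (fun q hqy => hq q fun l => (hqy l).trans (hyz l)) hyn
    set g := τ j ^ s with hg
    have hWz : prodPow τ z = prodPow τ y * g := by rw [hzy, prodPow_add_single τ y j s hy]
    have hWz' : prodPow τ (z + Pi.single i 1) = prodPow τ (y + Pi.single i 1) * g := by
      rw [hzy, add_right_comm, prodPow_add_single]
      intro l hl
      simp [hy l hl, (hij.trans hl).ne']
    have hcomm : CommLe R (A + 2 * 1) (pconj x (prodPow τ (z + Pi.single i 1)))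
        (pcomm g (τ i)) := by
      rcases hs with rfl | rfl
      · have h := (hq (z + Pi.single i 1) (fun _ => le_rfl) i j hij).inv_right
        refine h.congr_right ?_
        convert (hτ i j hij).inv using 1
        simp [hg, pcomm, mul_assoc]
      · have h := ((hq (y + Pi.single i 1) hyz i j hij).congr_right (hτ i j hij)).pconj g
        rw [← pconj_mul, ← hWz'] at h
        convert h using 1
        simp [hg, pcomm, pconj, mul_assoc]
    have h := (key.pconj (g * pcomm g (τ i))).trans
      ((show pconj (pconj x (prodPow τ (y + Pi.single i 1))) (g * pcomm g (τ i)) =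
        pconj (pconj x (prodPow τ (z + Pi.single i 1))) (pcomm g (τ i)) by
          rw [hWz', ← pconj_mul, ← pconj_mul, mul_assoc]) ▸ hcomm.near_pconj)
    rw [← pconj_mul, show prodPow τ y * τ i * (g * pcomm g (τ i)) = prodPow τ z * τ i by
      rw [hWz]; simp [pcomm, mul_assoc]] at h
    refine h.mono (le_of_eq ?_)
    push_cast
    ring

/-- A letter `τᵢ^{±1}` moves to its place in an ordered conjugating word. -/
theorem near_pconj_prodPow_mul_zpow
    (hτ : ∀ i j, i < j → Near R 1 (pcomm (τ i) (τ j)) (c i j))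
    (x : G) {A : ℝ} (i : Fin k) (s : ℤ) (hs : s = 1 ∨ s = -1) (z : Fin k → ℤ)
    (hq : ∀ q : Fin k → ℤ, ((∀ l, (q l).natAbs ≤ (z l).natAbs) ∨
        ∀ l, (q l).natAbs ≤ ((z + Pi.single i s : Fin k → ℤ) l).natAbs) →
      ∀ a b, a < b → CommLe R A (pconj x (prodPow τ q)) (c a b)) :
    Near R ((∑ j ∈ Finset.Ioi i, (z j).natAbs : ℕ) * (2 + A))
      (pconj x (prodPow τ z * τ i ^ s)) (pconj x (prodPow τ (z + Pi.single i s))) := by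
  rcases hs with rfl | rfl
  · rw [zpow_one]
    exact near_pconj_prodPow_mul hτ x i z fun q h => hq q (Or.inr h)
  · set y := z + Pi.single i (-1) with hy
    have hyz : z = y + Pi.single i 1 := by
      rw [hy, add_assoc, ← Pi.single_add]
      simp
    have h := near_pconj_prodPow_mul hτ x i y fun q h => hq q (Or.inl (by rwa [hyz]))
    have hsum : ∑ j ∈ Finset.Ioi i, (y j).natAbs = ∑ j ∈ Finset.Ioi i, (z j).natAbs := by
      refine Finset.sum_congr rfl fun l hl => ?_
      simp [hy, (Finset.mem_Ioi.1 hl).ne']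
    rw [hsum, ← hyz] at h
    have := (h.pconj (τ i)⁻¹).symm
    rw [← pconj_mul, ← pconj_mul] at this
    simpa using this

theorem sum_Ioi_natAbs_le (i : Fin k) (w : Fin k → ℤ) :
    ∑ j ∈ Finset.Ioi i, (w j).natAbs ≤ absSum w :=
  Finset.sum_le_sum_of_subset (Finset.subset_univ _)

/-- A product of two ordered words is put in order; the weight `A * 2 ^ ‖v'‖₁` allowed for the
commutators at the partial products makes the total cost geometric. -/
theorem near_pconj_prodPow_mul_prodPow
    (hτ : ∀ i j, i < j → Near R 1 (pcomm (τ i) (τ j)) (c i j))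
    (x : G) {A : ℝ} (hA : 0 ≤ A) (w v : Fin k → ℤ)
    (hq : ∀ v' q : Fin k → ℤ, (∀ l, 0 ≤ v' l ∧ v' l ≤ v l ∨ v l ≤ v' l ∧ v' l ≤ 0) →
      (∀ l, (q l).natAbs ≤ (w l + v' l).natAbs) →
      ∀ a b, a < b → CommLe R (A * 2 ^ absSum v') (pconj x (prodPow τ q)) (c a b)) :
    Near R (2 * absSum w * (2 + A) * 2 ^ absSum v)
      (pconj x (prodPow τ w * prodPow τ v)) (pconj x (prodPow τ (w + v))) := by
  induction hn : absSum v generalizing v with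
  | zero =>
    have : v = 0 := by
      funext i
      simpa using Finset.sum_eq_zero_iff.1 hn i (Finset.mem_univ i)
    rw [this, prodPow_zero, mul_one, add_zero]
    exact Near.refl _ (by positivity)
  | succ n ih =>
    obtain ⟨i', -, hi'⟩ : ∃ i' ∈ Finset.univ, (v i').natAbs ≠ 0 := by
      by_contra! h
      rw [absSum, Finset.sum_eq_zero h] at hn
      omega
    obtain ⟨j, s, y, -, hs, hvy, hy, hj, hne⟩ :=
      exists_add_single_eq (z := v) (i := i') (by simpa using hi')
    have hyn : absSum y = n := by
      rw [absSum, Finset.sum_eq_sum_sdiff_singleton_add (Finset.mem_univ j)] at hn ⊢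
      rw [Finset.sum_congr rfl fun l hl => by
        rw [hne l (Finset.notMem_singleton.1 (Finset.mem_sdiff.1 hl).2)]]
      omega
    have hvj : v j = y j + s := by rw [hvy]; simp
    have hyv : ∀ l, 0 ≤ y l ∧ y l ≤ v l ∨ v l ≤ y l ∧ y l ≤ 0 := by
      intro l
      rcases eq_or_ne l j with rfl | hl
      · omega
      · rw [hne l hl]
        omega
    have key := (ih y (fun v' q hv' => hq v' q fun l => by
      have := hv' l
      have := hyv l
      omega) hyn).pconj (τ j ^ s)
    have step := near_pconj_prodPow_mul_zpow hτ x (A := A * 2 ^ (n + 1)) j s hs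
      (w + y) (by
        rintro q (h | h) a b hab
        · refine (hq y q hyv h a b hab).mono ?_
          rw [hyn]
          gcongr
          · norm_num
          · exact n.le_succ
        · rw [← hn]
          refine hq v q (fun l => by omega) (fun l => ?_) a b hab
          rw [add_assoc, ← hvy] at h
          exact h l)
    rw [← pconj_mul, mul_assoc (prodPow τ w), ← prodPow_add_single τ y j s hy, ← hvy,
      ← pconj_mul] at key
    rw [add_assoc, ← hvy] at step
    refine (key.trans step).mono ?_
    have htail : ((∑ l ∈ Finset.Ioi j, ((w + y) l).natAbs : ℕ) : ℝ) ≤ absSum w := by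
      rw [Finset.sum_congr rfl fun l hl => by
        rw [Pi.add_apply, hy l (Finset.mem_Ioi.1 hl), add_zero]]
      exact_mod_cast sum_Ioi_natAbs_le j w
    have h1 : (1 : ℝ) ≤ 2 ^ (n + 1) := one_le_pow₀ (by norm_num)
    calc 2 * (absSum w : ℝ) * (2 + A) * 2 ^ n +
          (∑ l ∈ Finset.Ioi j, ((w + y) l).natAbs : ℕ) * (2 + A * 2 ^ (n + 1))
        ≤ 2 * (absSum w : ℝ) * (2 + A) * 2 ^ n +
          absSum w * (2 * 2 ^ (n + 1) + A * 2 ^ (n + 1)) := by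
          gcongr
          linarith
      _ = 2 * absSum w * (2 + A) * 2 ^ (n + 1) := by ring

end prodPow

/-! ### Norms of integer vectors -/

section norms

variable {k : ℕ}

theorem normV_nonneg (v : Fin k → ℤ) : 0 ≤ normV v := Real.sqrt_nonneg _

theorem normV_sq (v : Fin k → ℤ) : normV v ^ 2 = ∑ i, (v i : ℝ) ^ 2 :=
  Real.sq_sqrt (Finset.sum_nonneg fun _ _ => sq_nonneg _)

theorem natAbs_le_normV (v : Fin k → ℤ) (i : Fin k) : ((v i).natAbs : ℝ) ≤ normV v := by
  refine Real.le_sqrt_of_sq_le ?_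
  rw [Nat.cast_natAbs, Int.cast_abs, sq_abs]
  exact Finset.single_le_sum (f := fun i => (v i : ℝ) ^ 2) (fun _ _ => sq_nonneg _)
    (Finset.mem_univ i)

theorem normV_le_absSum (v : Fin k → ℤ) : normV v ≤ absSum v := by
  refine Real.sqrt_le_iff.2 ⟨Nat.cast_nonneg _, ?_⟩
  rw [absSum, Nat.cast_sum]
  refine le_trans (le_of_eq ?_) (Finset.sum_sq_le_sq_sum_of_nonneg fun i _ => Nat.cast_nonneg _)
  refine Finset.sum_congr rfl fun i _ => ?_
  rw [Nat.cast_natAbs, Int.cast_abs, sq_abs]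

theorem absSum_le_mul_normV (v : Fin k → ℤ) : (absSum v : ℝ) ≤ k * normV v := by
  rw [absSum, Nat.cast_sum]
  refine (Finset.sum_le_sum fun i _ => natAbs_le_normV v i).trans (le_of_eq ?_)
  simp

theorem absSum_le_of_natAbs_le_add {q w v : Fin k → ℤ}
    (h : ∀ l, (q l).natAbs ≤ (w l + v l).natAbs) : absSum q ≤ absSum w + absSum v := by
  rw [absSum, absSum, absSum, ← Finset.sum_add_distrib]
  exact Finset.sum_le_sum fun l _ => (h l).trans (Int.natAbs_add_le _ _)

theorem normV_sq_le_of_between {q w v v' : Fin k → ℤ}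
    (hv : ∀ l, 0 ≤ v' l ∧ v' l ≤ v l ∨ v l ≤ v' l ∧ v' l ≤ 0)
    (hq : ∀ l, (q l).natAbs ≤ (w l + v' l).natAbs) :
    normV q ^ 2 ≤ normV w ^ 2 + normV (w + v) ^ 2 := by
  rw [normV_sq, normV_sq, normV_sq, ← Finset.sum_add_distrib]
  refine Finset.sum_le_sum fun l _ => ?_
  have h₁ : q l ^ 2 ≤ (w l + v' l) ^ 2 := Int.natAbs_le_iff_sq_le.1 (hq l)
  have h₂ : (w l + v' l) ^ 2 ≤ w l ^ 2 + (w l + v l) ^ 2 := by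
    rcases hv l with ⟨h, h'⟩ | ⟨h, h'⟩
    · rcases le_total 0 (w l + v' l) with h0 | h0 <;>
        nlinarith [sq_nonneg (w l), sq_nonneg (w l + v l)]
    · rcases le_total 0 (w l + v' l) with h0 | h0 <;>
        nlinarith [sq_nonneg (w l), sq_nonneg (w l + v l)]
  exact_mod_cast h₁.trans h₂

/-- The exponent vector of the inverse of an ordered word, read in the reversed alphabet. -/
def negRev (z : Fin k → ℤ) : Fin k → ℤ := fun i => -z i.rev

theorem negRev_negRev (z : Fin k → ℤ) : negRev (negRev z) = z := by
  funext i
  simp [negRev]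

theorem negRev_add (w v : Fin k → ℤ) : negRev (w + v) = negRev w + negRev v := by
  funext i
  simp [negRev, add_comm]

theorem normV_negRev (z : Fin k → ℤ) : normV (negRev z) = normV z := by
  rw [normV, normV]
  congr 1
  simpa [negRev] using Equiv.sum_comp Fin.revPerm fun i => (z i : ℝ) ^ 2

theorem absSum_negRev (z : Fin k → ℤ) : absSum (negRev z) = absSum z := by
  simpa [negRev, absSum] using Equiv.sum_comp Fin.revPerm fun i => (z i).natAbs

end norms

/-! ### Uniform descent -/

section descent

variable {k : ℕ} {L : Finset ((Fin k → ℤ) →₀ ℤ)}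

theorem TameCond.exists_margin (h : TameCond L) :
    ∃ μ : ℝ, 0 < μ ∧ ∀ x : Fin k → ℝ, x ≠ 0 →
      ∃ lam ∈ L, ∀ v ∈ lam.support, μ * ‖x‖ ≤ ∑ i, x i * (v i : ℝ) := by
  let U : ℕ → Set (Fin k → ℝ) := fun n =>
    {x | ∃ lam ∈ L, ∀ v ∈ lam.support, 1 / ((n : ℝ) + 1) < ∑ i, x i * (v i : ℝ)}
  have hU : ∀ n, IsOpen (U n) := by
    intro n
    have : U n = ⋃ lam ∈ L, ⋂ v ∈ lam.support,
        {x | 1 / ((n : ℝ) + 1) < ∑ i, x i * (v i : ℝ)} := by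
      ext x
      simp [U]
    rw [this]
    refine isOpen_biUnion fun lam _ => isOpen_biInter_finset fun v _ => ?_
    exact isOpen_lt continuous_const (by fun_prop)
  have hcover : Metric.sphere (0 : Fin k → ℝ) 1 ⊆ ⋃ n, U n := by
    intro x hx
    have hx0 : x ≠ 0 := by
      rintro rfl
      simp at hx
    obtain ⟨lam, hlam, hpos⟩ := h x hx0
    have hev : ∀ᶠ n : ℕ in Filter.atTop, ∀ v ∈ lam.support,
        1 / ((n : ℝ) + 1) < ∑ i, x i * (v i : ℝ) :=
      (Finset.eventually_all _).2 fun v hv =>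
        tendsto_one_div_add_atTop_nhds_zero_nat.eventually_lt_const (hpos v hv)
    obtain ⟨n, hn⟩ := hev.exists
    exact Set.mem_iUnion.2 ⟨n, lam, hlam, hn⟩
  have hmono : Monotone U := by
    rintro n n' hn x ⟨lam, hlam, hx⟩
    refine ⟨lam, hlam, fun v hv => lt_of_le_of_lt ?_ (hx v hv)⟩
    gcongr
  obtain ⟨n, hn⟩ := (isCompact_sphere (0 : Fin k → ℝ) 1).elim_directed_cover U hU hcover
    hmono.directed_le
  refine ⟨1 / ((n : ℝ) + 1), by positivity, fun x hx => ?_⟩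
  have hx' : 0 < ‖x‖ := norm_pos_iff.2 hx
  obtain ⟨lam, hlam, hv⟩ := hn (show ‖x‖⁻¹ • x ∈ Metric.sphere (0 : Fin k → ℝ) 1 by
    simp [norm_smul, hx'.ne'])
  refine ⟨lam, hlam, fun v hvs => ?_⟩
  have := (hv v hvs).le
  simp only [Pi.smul_apply, smul_eq_mul, mul_assoc, ← Finset.mul_sum] at this
  rwa [inv_mul_eq_div, le_div_iff₀ hx'] at this

theorem exists_absSum_le (L : Finset ((Fin k → ℤ) →₀ ℤ)) :
    ∃ M : ℕ, ∀ lam ∈ L, ∀ w ∈ lam.support, absSum w ≤ M :=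
  ⟨L.sup fun lam => lam.support.sup absSum, fun _ hlam _ hw =>
    (Finset.le_sup (f := absSum) hw).trans
      (Finset.le_sup (f := fun lam : (Fin k → ℤ) →₀ ℤ => lam.support.sup absSum) hlam)⟩

/-- Far from the origin, some `λ ∈ L` moves every vector towards the origin by a definite
amount. -/
theorem TameCond.exists_descent (h : TameCond L) :
    ∃ ε : ℝ, 0 < ε ∧ ∃ ρ₀ : ℝ, 0 < ρ₀ ∧ ∀ v : Fin k → ℤ, ρ₀ ≤ normV v →
      ε ≤ normV v ∧ ∃ lam ∈ L, ∀ w ∈ lam.support,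
        normV w ^ 2 + normV (w + v) ^ 2 ≤ (normV v - ε) ^ 2 := by
  obtain ⟨μ, hμ, hL⟩ := h.exists_margin
  obtain ⟨M, hM⟩ := exists_absSum_le L
  set ε := μ / (k + 1) / 2 with hε
  have hε0 : 0 < ε := by positivity
  refine ⟨ε, hε0, ε + M ^ 2 / ε, by positivity, fun v hv => ?_⟩
  have hMε : (0 : ℝ) ≤ M ^ 2 / ε := by positivity
  have hvε : ε ≤ normV v := by linarith
  refine ⟨hvε, ?_⟩
  set x : Fin k → ℝ := fun i => -(v i : ℝ) with hx
  have hnorm : normV v ≤ k * ‖x‖ := by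
    refine (normV_le_absSum v).trans ?_
    rw [absSum, Nat.cast_sum]
    refine (Finset.sum_le_sum fun i _ => show ((v i).natAbs : ℝ) ≤ ‖x‖ from ?_).trans
      (le_of_eq (by simp))
    refine le_trans (le_of_eq ?_) (norm_le_pi_norm x i)
    rw [Nat.cast_natAbs, Int.cast_abs, Real.norm_eq_abs, hx, abs_neg]
  have hx0 : x ≠ 0 := by
    intro h0
    rw [h0, norm_zero, mul_zero] at hnorm
    linarith
  obtain ⟨lam, hlam, hw⟩ := hL x hx0
  refine ⟨lam, hlam, fun w hws => ?_⟩
  have hdot : 2 * ε * normV v ≤ ∑ i, x i * (w i : ℝ) := by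
    refine le_trans ?_ (hw w hws)
    have : 2 * ε * (k + 1) = μ := by
      rw [hε]
      field_simp
    rw [← this, mul_assoc (2 * ε)]
    gcongr
    linarith [norm_nonneg x]
  have hwM : normV w ^ 2 ≤ (M : ℝ) ^ 2 := by
    have h1 := normV_le_absSum w
    have h2 : (absSum w : ℝ) ≤ M := by exact_mod_cast hM lam hlam w hws
    exact pow_le_pow_left₀ (normV_nonneg w) (h1.trans h2) 2
  have hexp : normV (w + v) ^ 2 = normV w ^ 2 + normV v ^ 2 - 2 * ∑ i, x i * (w i : ℝ) := by
    rw [normV_sq, normV_sq, normV_sq, Finset.mul_sum, ← Finset.sum_add_distrib,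
      ← Finset.sum_sub_distrib]
    refine Finset.sum_congr rfl fun i _ => ?_
    simp only [hx, Pi.add_apply, Int.cast_add]
    ring
  have hMv : (M : ℝ) ^ 2 ≤ ε * normV v := by
    have : M ^ 2 / ε ≤ normV v := by linarith
    rwa [div_le_iff₀' hε0] at this
  rw [hexp]
  nlinarith

end descent

/-! ### Commutators in `H(ρ, ℛ)` -/

section commutators

variable {m k : ℕ} {aij : Fin k → Fin k → Fin m} {Lp Lm : Finset ((Fin k → ℤ) →₀ ℤ)}
  {ord : ((Fin k → ℤ) →₀ ℤ) → List (Fin k → ℤ)} {ρ : ℝ}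
  {Rx : Set (FreeGroup (Fin m ⊕ Fin k))}

theorem tword_ordWord (v : Fin k → ℤ) :
    tword (m := m) (ordWord v) = prodPow (tgen (m := m)) v := by
  rw [tword, ordWord, map_list_prod, List.map_ofFn, prodPow]
  congr 2
  funext i
  simp [tgen]

theorem near_pcomm_tgen (i j : Fin k) (hij : i < j) :
    Near (HRel aij Lp Lm ord ρ Rx) 1 (pcomm (tgen i) (tgen j)) (agen (aij i j)) :=
  areaLe_of_mem (Or.inl ⟨i, j, hij, rfl⟩)

theorem near_pcomm_tgen_rev (i j : Fin k) (hij : i < j) :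
    Near (HRel aij Lp Lm ord ρ Rx) 1 (pcomm (tgen i.rev) (tgen j.rev))
      (agen (aij j.rev i.rev))⁻¹ := by
  convert (near_pcomm_tgen j.rev i.rev (Fin.rev_lt_rev.2 hij)).inv using 1
  simp [pcomm, mul_assoc]

variable {r X : ℝ} {M : ℕ} {v w : Fin k → ℤ}

/-- The bound for one factor of the expansion of `b` by a relator from `Λ⁺`. -/
theorem commLe_pconj_prodPow_mul_prodPow (hr : 0 ≤ r) (hX : 0 ≤ X)
    (ih : ∀ q : Fin k → ℤ, normV q ≤ r → ∀ a b : Fin m,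
      CommLe (HRel aij Lp Lm ord ρ Rx) (X * 2 ^ absSum q) (agen a)
        (pconj (agen b) (prodPow tgen q)))
    (hwM : absSum w ≤ M) (hwv : normV w ^ 2 + normV (w + v) ^ 2 ≤ r ^ 2) (a b : Fin m) :
    CommLe (HRel aij Lp Lm ord ρ Rx)
      ((X * 2 ^ M + 2 * (2 * M * (2 + X * 2 ^ M))) * 2 ^ absSum v) (agen a)
      (pconj (agen b) (prodPow tgen w * prodPow tgen v)) := by
  have hnear := near_pconj_prodPow_mul_prodPow (R := HRel aij Lp Lm ord ρ Rx)
    (fun i j => near_pcomm_tgen i j) (agen b) (A := X * 2 ^ M) (by positivity) w v (by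
      intro v' q hv' hq i j _
      have hqr : normV q ≤ r :=
        le_of_sq_le_sq ((normV_sq_le_of_between hv' hq).trans hwv) hr
      refine (ih q hqr (aij i j) b).symm.mono ?_
      rw [mul_assoc, ← pow_add]
      gcongr
      · norm_num
      · exact (absSum_le_of_natAbs_le_add hq).trans (by omega))
  have hend : normV (w + v) ≤ r :=
    le_of_sq_le_sq (by linarith [sq_nonneg (normV w)]) hr
  refine ((ih (w + v) hend a b).congr_right hnear).mono ?_
  have h₁ : (2 : ℝ) ^ absSum (w + v) ≤ 2 ^ M * 2 ^ absSum v := by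
    rw [← pow_add]
    gcongr
    · norm_num
    · exact (absSum_le_of_natAbs_le_add (w := w) (v := v) fun _ => le_rfl).trans (by omega)
  have h₂ : (absSum w : ℝ) ≤ M := by exact_mod_cast hwM
  calc X * 2 ^ absSum (w + v) + 2 * (2 * absSum w * (2 + X * 2 ^ M) * 2 ^ absSum v)
      ≤ X * (2 ^ M * 2 ^ absSum v) + 2 * (2 * M * (2 + X * 2 ^ M) * 2 ^ absSum v) := by gcongr
    _ = _ := by ring

/-- The bound for one factor of the expansion of `a` by a relator from `Λ⁻`. -/
theorem commLe_pconj_inv_prodPow (hr : 0 ≤ r) (hX : 0 ≤ X)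
    (ih : ∀ q : Fin k → ℤ, normV q ≤ r → ∀ a b : Fin m,
      CommLe (HRel aij Lp Lm ord ρ Rx) (X * 2 ^ absSum q) (agen a)
        (pconj (agen b) (prodPow tgen q)))
    (hwM : absSum w ≤ M) (hwv : normV w ^ 2 + normV (w + v) ^ 2 ≤ r ^ 2) (a b : Fin m) :
    CommLe (HRel aij Lp Lm ord ρ Rx)
      ((X * 2 ^ M + 2 * (2 * M * (2 + X * 2 ^ M))) * 2 ^ absSum v)
      (pconj (agen a) (prodPow tgen w)⁻¹) (pconj (agen b) (prodPow tgen v)) := by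
  have hinv : ∀ z : Fin k → ℤ, (prodPow (tgen (m := m)) z)⁻¹ =
      prodPow (fun i => tgen (m := m) i.rev) (negRev z) := fun z => prodPow_inv _ z
  have ih' : ∀ q : Fin k → ℤ, normV q ≤ r → ∀ e : Fin m,
      CommLe (HRel aij Lp Lm ord ρ Rx) (X * 2 ^ absSum q)
        (pconj (agen a) (prodPow (fun i => tgen (m := m) i.rev) q)) (agen e) := by
    intro q hq e
    rw [← negRev_negRev q, ← hinv, absSum_negRev, commLe_pconj_left_iff, inv_inv]
    exact ih (negRev q) (by rwa [normV_negRev]) a e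
  have hnear := near_pconj_prodPow_mul_prodPow (R := HRel aij Lp Lm ord ρ Rx)
    (fun i j => near_pcomm_tgen_rev i j) (agen a) (A := X * 2 ^ M) (by positivity)
    (negRev w) (negRev v) (by
      intro v' q hv' hq i j _
      have hqr : normV q ≤ r := by
        refine le_of_sq_le_sq ((normV_sq_le_of_between hv' hq).trans ?_) hr
        rwa [← negRev_add, normV_negRev, normV_negRev]
      refine (ih' q hqr _).inv_right.mono ?_
      rw [mul_assoc, ← pow_add]
      gcongr
      · norm_num
      · refine (absSum_le_of_natAbs_le_add hq).trans ?_
        rw [absSum_negRev]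
        omega)
  have hend : normV (w + v) ≤ r :=
    le_of_sq_le_sq (by linarith [sq_nonneg (normV w)]) hr
  have hcomm := ih' (negRev (w + v)) (by rwa [normV_negRev]) b
  rw [← negRev_add, absSum_negRev, absSum_negRev, ← hinv, ← hinv, ← hinv] at hnear
  rw [absSum_negRev, ← hinv] at hcomm
  have h := (hcomm.symm.congr_right hnear).symm
  rw [pconj_mul, commLe_pconj_left_iff, inv_inv] at h
  refine h.mono ?_
  have h₁ : (2 : ℝ) ^ absSum (w + v) ≤ 2 ^ M * 2 ^ absSum v := by
    rw [← pow_add]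
    gcongr
    · norm_num
    · exact (absSum_le_of_natAbs_le_add (w := w) (v := v) fun _ => le_rfl).trans (by omega)
  have h₂ : (absSum w : ℝ) ≤ M := by exact_mod_cast hwM
  calc X * 2 ^ absSum (w + v) + 2 * (2 * absSum w * (2 + X * 2 ^ M) * 2 ^ absSum v)
      ≤ X * (2 ^ M * 2 ^ absSum v) + 2 * (2 * M * (2 + X * 2 ^ M) * 2 ^ absSum v) := by gcongr
    _ = _ := by ring

theorem IsSupportOrder.sum_natAbs (hord : IsSupportOrder ord) (lam : (Fin k → ℤ) →₀ ℤ) :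
    ((ord lam).map fun w => (lam w).natAbs).sum = ∑ w ∈ lam.support, (lam w).natAbs := by
  classical
  rw [← List.sum_toFinset _ (hord lam).1]
  refine Finset.sum_congr ?_ fun _ _ => rfl
  ext w
  rw [List.mem_toFinset, (hord lam).2]

/-- Expanding `b` in `[a, b^{u_v}]` by a relator from `Λ⁺`. -/
theorem commLe_of_mem_Lp (hord : IsSupportOrder ord) {lam : (Fin k → ℤ) →₀ ℤ} (hlam : lam ∈ Lp)
    {P : ℝ} {a b : Fin m}
    (h : ∀ w ∈ lam.support, CommLe (HRel aij Lp Lm ord ρ Rx) P (agen a)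
      (pconj (agen b) (prodPow tgen w * prodPow tgen v))) :
    CommLe (HRel aij Lp Lm ord ρ Rx) ((∑ w ∈ lam.support, (lam w).natAbs : ℕ) * P + 2)
      (agen a) (pconj (agen b) (prodPow tgen v)) := by
  have hrel : Near (HRel aij Lp Lm ord ρ Rx) 1
      ((ord lam).map fun w => pconj (agen b ^ lam w) (tword (ordWord w))).prod (agen b) :=
    areaLe_of_mem (Or.inr (Or.inr (Or.inl ⟨b, lam, hlam, rfl⟩)))
  have hrel' := (hrel.pconj (prodPow tgen v)).symm
  rw [pconj_list_prod, List.map_map] at hrel'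
  have hprod := CommLe.list_prod_right (R := HRel aij Lp Lm ord ρ Rx) (x := agen a) (A := P)
    (ord lam) ((fun x => pconj x (prodPow tgen v)) ∘
      fun w => pconj (agen b ^ lam w) (tword (ordWord w))) (fun w => (lam w).natAbs) (by
      intro w hw
      have := (h w (((hord lam).2 w).1 hw)).zpow_right (lam w)
      rwa [← pconj_zpow, pconj_mul, ← tword_ordWord w] at this)
  rw [hord.sum_natAbs] at hprod
  exact (hprod.congr_right hrel').mono (by linarith)

/-- Expanding `a` in `[a, b^{u_v}]` by a relator from `Λ⁻`. -/
theorem commLe_of_mem_Lm (hord : IsSupportOrder ord) {lam : (Fin k → ℤ) →₀ ℤ} (hlam : lam ∈ Lm)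
    {P : ℝ} {a b : Fin m}
    (h : ∀ w ∈ lam.support, CommLe (HRel aij Lp Lm ord ρ Rx) P
      (pconj (agen a) (prodPow tgen w)⁻¹) (pconj (agen b) (prodPow tgen v))) :
    CommLe (HRel aij Lp Lm ord ρ Rx) ((∑ w ∈ lam.support, (lam w).natAbs : ℕ) * P + 2)
      (agen a) (pconj (agen b) (prodPow tgen v)) := by
  have hrel : Near (HRel aij Lp Lm ord ρ Rx) 1
      ((ord lam).map fun w => pconj (agen a ^ lam w) (tword (ordWord w))⁻¹).prod (agen a) :=
    areaLe_of_mem (Or.inr (Or.inr (Or.inr (Or.inl ⟨a, lam, hlam, rfl⟩))))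
  have hprod := CommLe.list_prod_right (R := HRel aij Lp Lm ord ρ Rx)
    (x := pconj (agen b) (prodPow tgen v)) (A := P)
    (ord lam) (fun w => pconj (agen a ^ lam w) (tword (ordWord w))⁻¹)
    (fun w => (lam w).natAbs) (by
      intro w hw
      have := (h w (((hord lam).2 w).1 hw)).symm.zpow_right (lam w)
      rwa [← pconj_zpow, ← tword_ordWord w] at this)
  rw [hord.sum_natAbs] at hprod
  exact (hprod.congr_right hrel.symm).symm.mono (by linarith)

end commutators

/-- The commutators `[a, b^{u_v}]` have area at most exponential in `‖v‖`, with a base that depends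
only on `Λ⁺ ∪ Λ⁻`. -/
theorem TameCond.exists_commLe {k : ℕ} {L : Finset ((Fin k → ℤ) →₀ ℤ)} (htame : TameCond L) :
    ∃ ρ₀ : ℝ, 0 < ρ₀ ∧ ∃ C : ℝ, 1 ≤ C ∧ ∀ ρ : ℝ, ρ₀ ≤ ρ → ∀ m : ℕ,
      ∀ Lp Lm : Finset ((Fin k → ℤ) →₀ ℤ), Lp ∪ Lm = L →
      ∀ ord : ((Fin k → ℤ) →₀ ℤ) → List (Fin k → ℤ), IsSupportOrder ord →
      ∀ (aij : Fin k → Fin k → Fin m) (Rx : Set (FreeGroup (Fin m ⊕ Fin k)))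
        (v : Fin k → ℤ) (a b : Fin m),
        CommLe (HRel aij Lp Lm ord ρ Rx) (C ^ normV v * 2 ^ absSum v) (agen a)
          (pconj (agen b) (prodPow tgen v)) := by
  obtain ⟨ε, hε, ρ₀, hρ₀, hdesc⟩ := htame.exists_descent
  obtain ⟨M, hM⟩ := exists_absSum_le L
  set S : ℕ := L.sup fun lam => ∑ w ∈ lam.support, (lam w).natAbs with hS
  have hSle : ∀ lam ∈ L, ∑ w ∈ lam.support, (lam w).natAbs ≤ S := fun lam hlam =>
    Finset.le_sup (f := fun lam : (Fin k → ℤ) →₀ ℤ => ∑ w ∈ lam.support, (lam w).natAbs) hlam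
  set B : ℝ := S * (2 ^ M + 2 * (2 * M * (2 + 2 ^ M))) + 2 with hB
  have hB1 : 1 ≤ B := by
    have : (0 : ℝ) ≤ S * (2 ^ M + 2 * (2 * M * (2 + 2 ^ M))) := by positivity
    linarith
  set C : ℝ := B ^ (1 / ε) with hC
  have hC1 : 1 ≤ C := Real.one_le_rpow hB1 (by positivity)
  have hCε : C ^ ε = B := by
    rw [hC, ← Real.rpow_mul (by linarith), one_div_mul_cancel hε.ne', Real.rpow_one]
  refine ⟨ρ₀, hρ₀, C, hC1, ?_⟩
  intro ρ hρ m Lp Lm hL ord hord aij Rx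
  have near_origin : ∀ v : Fin k → ℤ, normV v < ρ → ∀ a b : Fin m,
      CommLe (HRel aij Lp Lm ord ρ Rx) (C ^ normV v * 2 ^ absSum v) (agen a)
        (pconj (agen b) (prodPow tgen v)) := by
    intro v hv a b
    have hrel : AreaLe (HRel aij Lp Lm ord ρ Rx) 1
        (pcomm (agen a) (pconj (agen b) (tword (ordWord v)))) :=
      areaLe_of_mem (Or.inr (Or.inl ⟨a, b, v, hv, rfl⟩))
    rw [tword_ordWord] at hrel
    exact (commLe_iff_pcomm.2 hrel).mono (one_le_mul_of_one_le_of_one_le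
      (Real.one_le_rpow hC1 (normV_nonneg v)) (one_le_pow₀ (by norm_num)))
  have key : ∀ n : ℕ, ∀ v : Fin k → ℤ, normV v ≤ n * ε → ∀ a b : Fin m,
      CommLe (HRel aij Lp Lm ord ρ Rx) (C ^ normV v * 2 ^ absSum v) (agen a)
        (pconj (agen b) (prodPow tgen v)) := by
    intro n
    induction n with
    | zero =>
      intro v hv a b
      rw [Nat.cast_zero, zero_mul] at hv
      exact near_origin v (by linarith) a b
    | succ n ih =>
      intro v hv a b
      by_cases hvρ : normV v < ρ
      · exact near_origin v hvρ a b
      obtain ⟨hεv, lam, hlam, hw⟩ := hdesc v (hρ.trans (not_lt.1 hvρ))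
      set r := normV v - ε with hr
      have hr0 : 0 ≤ r := by linarith
      set X := C ^ r with hX
      have hX1 : 1 ≤ X := Real.one_le_rpow hC1 hr0
      have hXB : X * B = C ^ normV v := by
        rw [← hCε, hX, ← Real.rpow_add (by linarith), hr, sub_add_cancel]
      have ih' : ∀ q : Fin k → ℤ, normV q ≤ r → ∀ a b : Fin m,
          CommLe (HRel aij Lp Lm ord ρ Rx) (X * 2 ^ absSum q) (agen a)
            (pconj (agen b) (prodPow tgen q)) := by
        intro q hq a b
        refine (ih q ?_ a b).mono ?_
        · push_cast at hv
          linarith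
        · gcongr
          exact Real.rpow_le_rpow_of_exponent_le hC1 hq
      have hcomm : CommLe (HRel aij Lp Lm ord ρ Rx)
          ((∑ w ∈ lam.support, (lam w).natAbs : ℕ) *
            ((X * 2 ^ M + 2 * (2 * M * (2 + X * 2 ^ M))) * 2 ^ absSum v) + 2)
          (agen a) (pconj (agen b) (prodPow tgen v)) := by
        rcases Finset.mem_union.1 (hL ▸ hlam) with hp | hm
        · exact commLe_of_mem_Lp hord hp fun w hws =>
            commLe_pconj_prodPow_mul_prodPow hr0 (by linarith) ih' (hM lam hlam w hws)
              (hw w hws) a b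
        · exact commLe_of_mem_Lm hord hm fun w hws =>
            commLe_pconj_inv_prodPow hr0 (by linarith) ih' (hM lam hlam w hws) (hw w hws) a b
      refine hcomm.mono ?_
      have hS' : ((∑ w ∈ lam.support, (lam w).natAbs : ℕ) : ℝ) ≤ S := by
        exact_mod_cast hSle lam hlam
      have h2 : (1 : ℝ) ≤ 2 ^ absSum v := one_le_pow₀ (by norm_num)
      have hX2 : 1 ≤ X * 2 ^ absSum v := one_le_mul_of_one_le_of_one_le hX1 h2
      calc ((∑ w ∈ lam.support, (lam w).natAbs : ℕ) : ℝ) *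
            ((X * 2 ^ M + 2 * (2 * M * (2 + X * 2 ^ M))) * 2 ^ absSum v) + 2
          ≤ S * ((X * 2 ^ M + 2 * (2 * M * (2 * X + X * 2 ^ M))) * 2 ^ absSum v) +
            2 * (X * 2 ^ absSum v) := by
            gcongr <;> linarith
        _ = X * B * 2 ^ absSum v := by
            rw [hB]
            ring
        _ = C ^ normV v * 2 ^ absSum v := by rw [hXB]
  intro v
  obtain ⟨n, hn⟩ := exists_nat_ge (normV v / ε)
  exact key n v ((div_le_iff₀ hε).1 hn)

/-! ### Ordering a conjugating word -/

section ordering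

variable {k : ℕ}

theorem normV_le_of_natAbs_le {q z : Fin k → ℤ} (h : ∀ l, (q l).natAbs ≤ (z l).natAbs) :
    normV q ≤ normV z := by
  refine Real.sqrt_le_sqrt (Finset.sum_le_sum fun l _ => ?_)
  exact_mod_cast Int.natAbs_le_iff_sq_le.1 (h l)

theorem expVec_mul (u v : FreeGroup (Fin k)) : expVec (u * v) = expVec u + expVec v := by
  simp [expVec]

theorem mk_singleton_eq_zpow {α : Type*} (i : α) (b : Bool) :
    FreeGroup.mk [(i, b)] = FreeGroup.of i ^ (if b then (1 : ℤ) else -1) := by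
  cases b
  · simp [FreeGroup.of, FreeGroup.invRev]
  · simp [FreeGroup.of]

theorem expVec_of_zpow (i : Fin k) (s : ℤ) :
    expVec (FreeGroup.of i ^ s) = Pi.single i s := by
  rw [expVec, map_zpow, toAdd_zpow, theta, FreeGroup.lift_apply_of, toAdd_ofAdd, ← Pi.single_smul]
  simp

theorem absSum_expVec_mk_le (p : List (Fin k × Bool)) :
    absSum (expVec (FreeGroup.mk p)) ≤ p.length := by
  induction p with
  | nil => simp [absSum, expVec, ← FreeGroup.one_eq_mk]
  | cons y p ih =>
    obtain ⟨i, b⟩ := y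
    rw [← List.singleton_append, ← FreeGroup.mul_mk, expVec_mul, mk_singleton_eq_zpow,
      expVec_of_zpow]
    refine (absSum_le_of_natAbs_le_add fun _ => le_rfl).trans ?_
    have : absSum (Pi.single i (if b then (1 : ℤ) else -1) : Fin k → ℤ) = 1 := by
      rw [absSum, Finset.sum_eq_single i]
      · cases b <;> simp
      · intro l _ hl
        simp [hl]
      · simp
    rw [List.length_append, List.length_singleton]
    omega

theorem traceInBall_of_norm_lt {u : FreeGroup (Fin k)} {n : ℕ} (h : u.norm < n) :
    TraceInBall u n := by
  intro p hp
  refine (normV_le_absSum _).trans_lt ?_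
  have h₁ := absSum_expVec_mk_le p
  have h₂ : p.length ≤ u.norm := hp.length_le
  exact_mod_cast (h₁.trans h₂).trans_lt h

theorem TraceInBall.pos {u : FreeGroup (Fin k)} {n : ℕ} (h : TraceInBall u n) : 1 ≤ n := by
  have := (normV_nonneg _).trans_lt (h [] List.nil_prefix)
  exact_mod_cast this

theorem orderingWord_eq {m : ℕ} (a : Fin m) (u : FreeGroup (Fin k)) :
    orderingWord a u = pconj (agen a) (tword u) *
      (pconj (agen a) (prodPow tgen (expVec u)))⁻¹ := by
  rw [orderingWord, ordered, tword_ordWord]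
  simp [pconj, mul_assoc]

/-- If all commutators in the ball of radius `n` have area at most `A`, each letter of a word with
trace in that ball can be put in order at a cost linear in `A`. -/
theorem areaLe_orderingWord {m : ℕ} {R : Set (FreeGroup (Fin m ⊕ Fin k))}
    {aij : Fin k → Fin k → Fin m}
    (hR : ∀ i j, i < j → Near R 1 (pcomm (tgen i) (tgen j)) (agen (aij i j)))
    {n : ℕ} {A : ℝ} (hA : 0 ≤ A)
    (hcomm : ∀ q : Fin k → ℤ, normV q < n → ∀ a b : Fin m,
      CommLe R A (agen a) (pconj (agen b) (prodPow tgen q)))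
    (a : Fin m) {u : FreeGroup (Fin k)} (hu : TraceInBall u n) :
    AreaLe R (u.norm * (k * n * (2 + A))) (orderingWord a u) := by
  have key : ∀ p : List (Fin k × Bool), p <+: u.toWord →
      Near R (p.length * (k * n * (2 + A))) (pconj (agen a) (tword (FreeGroup.mk p)))
        (pconj (agen a) (prodPow tgen (expVec (FreeGroup.mk p)))) := by
    intro p
    induction p using List.reverseRecOn with
    | nil =>
      intro _
      rw [← FreeGroup.one_eq_mk, show expVec (1 : FreeGroup (Fin k)) = 0 by simp [expVec],
        prodPow_zero, tword, map_one]
      exact Near.refl _ (by simp)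
    | append_singleton p y ih =>
      intro hp
      obtain ⟨i, b⟩ := y
      have hp' : p <+: u.toWord := (List.prefix_append p _).trans hp
      have hz := hu p hp'
      have hz' := hu _ hp
      rw [← FreeGroup.mul_mk, mk_singleton_eq_zpow, expVec_mul, expVec_of_zpow] at hz' ⊢
      set s : ℤ := if b then 1 else -1 with hs
      have hs' : s = 1 ∨ s = -1 := by
        cases b <;> simp [hs]
      set z := expVec (FreeGroup.mk p) with hzdef
      have step := near_pconj_prodPow_mul_zpow hR (agen a) (A := A) i s hs' z (by
        rintro q (h | h) e f -
        · exact (hcomm q ((normV_le_of_natAbs_le h).trans_lt hz) _ a).symm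
        · exact (hcomm q ((normV_le_of_natAbs_le h).trans_lt hz') _ a).symm)
      have h := ((ih hp').pconj (tgen i ^ s)).trans (by rw [← pconj_mul]; exact step)
      rw [← pconj_mul] at h
      have htw : tword (m := m) (FreeGroup.mk p * FreeGroup.of i ^ s) =
          tword (FreeGroup.mk p) * tgen i ^ s := by
        simp [tword, tgen]
      rw [htw]
      refine h.mono ?_
      have htail : ((∑ j ∈ Finset.Ioi i, (z j).natAbs : ℕ) : ℝ) ≤ k * n := by
        have h₁ : ((∑ j ∈ Finset.Ioi i, (z j).natAbs : ℕ) : ℝ) ≤ absSum z := by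
          exact_mod_cast sum_Ioi_natAbs_le i z
        refine (h₁.trans (absSum_le_mul_normV z)).trans ?_
        gcongr
      have : ((∑ j ∈ Finset.Ioi i, (z j).natAbs : ℕ) : ℝ) * (2 + A) ≤ k * n * (2 + A) := by
        gcongr
      rw [List.length_append, List.length_singleton, Nat.cast_add, Nat.cast_one, add_one_mul]
      linarith
  have := key u.toWord (List.prefix_refl _)
  rw [FreeGroup.mk_toWord] at this
  rw [orderingWord_eq]
  exact this

end ordering

/-- In `H(ρ, ℛ)` the word `(u⁻¹ a u)(ū⁻¹ a⁻¹ ū)` represents `1`; its area is at most `|u| Kⁿ` if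
the trace of `u` lies in the open ball of radius `n`, and at most `Kⁿ` if `|u| ≤ n`. -/
theorem ordering_area_bound (k : ℕ) (hk : 1 ≤ k)
    (L : Finset ((Fin k → ℤ) →₀ ℤ)) (htame : TameCond L) :
    ∃ ρ₀ : ℝ, 0 < ρ₀ ∧ ∀ ρ : ℝ, ρ₀ ≤ ρ → ∀ m : ℕ, 1 ≤ m →
      ∃ K : ℝ, 1 < K ∧
        ∀ (Lp Lm : Finset ((Fin k → ℤ) →₀ ℤ)), Lp ∪ Lm = L →
        ∀ (ord : ((Fin k → ℤ) →₀ ℤ) → List (Fin k → ℤ)), IsSupportOrder ord →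
        ∀ (aij : Fin k → Fin k → Fin m) (Rx : Set (FreeGroup (Fin m ⊕ Fin k))), Rx.Finite →
        ∀ (a : Fin m) (u : FreeGroup (Fin k)),
          orderingWord a u ∈ Subgroup.normalClosure (HRel aij Lp Lm ord ρ Rx) ∧
          (∀ n : ℕ, TraceInBall u n →
            (area (HRel aij Lp Lm ord ρ Rx) (orderingWord a u) : ℝ) ≤ (u.norm : ℝ) * K ^ n) ∧
          (∀ n : ℕ, u.norm ≤ n →
            (area (HRel aij Lp Lm ord ρ Rx) (orderingWord a u) : ℝ) ≤ K ^ n) := by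
  obtain ⟨ρ₀, hρ₀, C, hC, hcomm⟩ := htame.exists_commLe
  refine ⟨ρ₀, hρ₀, fun ρ hρ m _ => ?_⟩
  have hk' : (1 : ℝ) ≤ k := by exact_mod_cast hk
  set G : ℝ := C * 2 ^ k with hG
  have hG1 : 1 ≤ G := one_le_mul_of_one_le_of_one_le hC (one_le_pow₀ (by norm_num))
  set J : ℝ := 6 * k * G with hJ
  have hJ1 : 6 ≤ J := by
    have := one_le_mul_of_one_le_of_one_le hk' hG1
    rw [hJ, mul_assoc]
    linarith
  have hJK : J ≤ 2 * J ^ 2 := by nlinarith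
  refine ⟨2 * J ^ 2, by linarith, ?_⟩
  intro Lp Lm hL ord hord aij Rx _ a u
  have hball : ∀ n : ℕ, TraceInBall u n →
      AreaLe (HRel aij Lp Lm ord ρ Rx) (u.norm * J ^ n) (orderingWord a u) := by
    intro n hn
    have hA := areaLe_orderingWord (R := HRel aij Lp Lm ord ρ Rx)
      (fun i j => near_pcomm_tgen i j) (A := G ^ n) (by positivity) (by
        intro q hq a b
        refine (hcomm ρ hρ m Lp Lm hL ord hord aij Rx q a b).mono ?_
        rw [hG, mul_pow, ← pow_mul, ← Real.rpow_natCast C n]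
        have hqk : absSum q ≤ k * n := by
          have := (absSum_le_mul_normV q).trans (mul_le_mul_of_nonneg_left hq.le k.cast_nonneg)
          exact_mod_cast this
        gcongr
        norm_num) a hn
    refine hA.mono ?_
    have hn1 := hn.pos
    have h2n : (n : ℝ) ≤ 2 ^ n := by exact_mod_cast Nat.lt_two_pow_self.le
    have hGn : 1 ≤ G ^ n := one_le_pow₀ hG1
    have hkn : (k : ℝ) ≤ k ^ n := le_self_pow₀ hk' (by omega)
    have h3n : (3 : ℝ) ≤ 3 ^ n := le_self_pow₀ (by norm_num) (by omega)
    gcongr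
    calc (k : ℝ) * n * (2 + G ^ n) ≤ k ^ n * 2 ^ n * (3 * G ^ n) := by
          gcongr
          linarith
      _ ≤ k ^ n * 2 ^ n * (3 ^ n * G ^ n) := by gcongr
      _ = J ^ n := by
          rw [hJ, ← mul_pow, ← mul_pow, ← mul_pow]
          ring
  refine ⟨(hball _ (traceInBall_of_norm_lt (Nat.lt_succ_self _))).mem_normalClosure,
    fun n hn => (hball n hn).area_le.trans (by gcongr), fun n hn => ?_⟩
  refine (hball _ (traceInBall_of_norm_lt (Nat.lt_succ_of_le hn))).area_le.trans ?_
  rcases Nat.eq_zero_or_pos n with rfl | hn0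
  · rw [Nat.le_zero.1 hn]
    simp
  have hun : (u.norm : ℝ) ≤ 2 ^ n := by exact_mod_cast hn.trans Nat.lt_two_pow_self.le
  calc (u.norm : ℝ) * J ^ (n + 1) ≤ 2 ^ n * J ^ (2 * n) := by
        gcongr
        · linarith
        · omega
    _ = (2 * J ^ 2) ^ n := by rw [mul_pow 2 (J ^ 2), ← pow_mul J]
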